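/- For all integers n ≥ 0 and α ≥ 0, the number of (6,12)-regular overpartitions satisfies p̄_{6,12}( 2^{2α+2} · (6n + 5) ) ≡ 0 (mod 8). -/

import Mathlib

/-- The number of `(j,k)`-regular overpartitions of `n`: pairs `(λ, μ)` where `λ` is a
partition of some `m ≤ n` into distinct parts, `μ` is a partition of `n - m`, and no part
of `λ` or `μ` is congruent to `j` modulo `k`. -/
def regularOverpartitions (j k n : ℕ) : ℕ :=
  ∑ m ∈ Finset.range (n + 1),
    ((Nat.Partition.distincts m).filter (fun lam => ∀ i ∈ lam.parts, i % k ≠ j)).card *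
    ((Finset.univ : Finset (Nat.Partition (n - m))).filter
      (fun mu => ∀ i ∈ mu.parts, i % k ≠ j)).card

/-!
Let `a = ∑_{m ≥ 1} (-1)^m q^{m²}`. Gauss's identity says `1 + 2a = ∏ (1 - q^i) / (1 + q^i)`, so the
generating function `G` of the `(j,k)`-regular overpartitions satisfies `G (1 + 2a) = H`, where `H`
is the product of `(1 - q^i) / (1 + q^i)` over the forbidden parts `i ≡ j (mod k)`. Every forbidden
part is a multiple of `d = gcd(j, k)`, hence so is every exponent of `H`, and `H ≡ 1 (mod 2)`.
Inverting `1 + 2a` modulo `8` gives `G ≡ H (1 - 2a) + 4a² (mod 8)`. The exponents of the first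
term are squares modulo `d`, and those of `a²` with an odd coefficient are twice squares.
For `(j, k) = (6, 12)` the number `2^{2α+2} (6n + 5)` is `2` modulo `d = 6`, which is not a square,
and its even `2`-adic valuation keeps it from being twice a square.
-/

open Finset Filter Topology PowerSeries PowerSeries.WithPiTopology

section ShanksIdentity

variable {R : Type*} [CommRing R] (q : R)

/-- The `s`-th summand in Shanks' finite form of Gauss's identity: the sum over `s ≤ n` is
`(1 + 2 ∑_{m=1}^n (-1)^m q^{m²}) ∏_{i=1}^n (1 + q^i)`, while modulo `q^{n+1}` only `s = 0`
survives. -/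
def shanksTerm (n s : ℕ) : R :=
  (-1) ^ s * q ^ (s * (n + 1)) * (∏ i ∈ Ico s n, (1 - q ^ (i + 1))) * ∏ i ∈ range s, (1 + q ^ i)

lemma sum_shanksTerm_succ_sub_mul_shanksTerm {n m : ℕ} (hm : m ≤ n + 1) :
    ∑ s ∈ range m, (shanksTerm q (n + 1) s - (1 + q ^ (n + 1)) * shanksTerm q n s) =
      (-1) ^ m * q ^ (m * (n + 1)) * (∏ i ∈ Ico m (n + 1), (1 - q ^ i)) *
        ∏ i ∈ range m, (1 + q ^ i) := by
  induction m with
  | zero =>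
    have prod_eq_zero : ∏ i ∈ Ico 0 (n + 1), (1 - q ^ i) = 0 :=
      Finset.prod_eq_zero (i := 0) (by simp) (by simp)
    rw [prod_eq_zero]
    simp
  | succ m ih =>
    have prod_bot : ∏ i ∈ Ico m (n + 1), (1 - q ^ i) =
        (1 - q ^ m) * ∏ i ∈ Ico (m + 1) (n + 1), (1 - q ^ i) :=
      prod_eq_prod_Ico_succ_bot (by lia) _
    have prod_shift : ∏ i ∈ Ico m n, (1 - q ^ (i + 1)) =
        ∏ i ∈ Ico (m + 1) (n + 1), (1 - q ^ i) :=
      prod_Ico_add' (fun i ↦ 1 - q ^ i) m n 1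
    rw [sum_range_succ, ih (by lia), prod_bot, shanksTerm, shanksTerm,
      prod_Ico_succ_top (by lia) fun i ↦ 1 - q ^ (i + 1), prod_shift, prod_range_succ]
    ring

lemma sum_shanksTerm (n : ℕ) :
    ∑ s ∈ range (n + 1), shanksTerm q n s =
      (1 + 2 * ∑ m ∈ range n, (-1) ^ (m + 1) * q ^ ((m + 1) ^ 2)) *
        ∏ i ∈ range n, (1 + q ^ (i + 1)) := by
  induction n with
  | zero => simp [shanksTerm]
  | succ n ih =>
    have telescoped := sum_shanksTerm_succ_sub_mul_shanksTerm q (le_refl (n + 1))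
    have prod_zero_term : ∏ i ∈ range (n + 1), (1 + q ^ i) =
        2 * ∏ i ∈ range n, (1 + q ^ (i + 1)) := by
      rw [prod_range_succ']; ring
    have last_term : shanksTerm q (n + 1) (n + 1) =
        (-1) ^ (n + 1) * q ^ ((n + 1) * (n + 2)) * ∏ i ∈ range (n + 1), (1 + q ^ i) := by
      simp [shanksTerm]
    rw [sum_sub_distrib, ← mul_sum, ih, Ico_self, prod_empty, prod_zero_term] at telescoped
    rw [sum_range_succ, last_term, prod_zero_term, prod_range_succ,
      sum_range_succ fun m ↦ (-1) ^ (m + 1) * q ^ ((m + 1) ^ 2)]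
    linear_combination telescoped

lemma pow_dvd_sum_shanksTerm_sub_prod (n : ℕ) :
    q ^ (n + 1) ∣ ∑ s ∈ range (n + 1), shanksTerm q n s - ∏ i ∈ range n, (1 - q ^ (i + 1)) := by
  have zeroth_term : shanksTerm q n 0 = ∏ i ∈ range n, (1 - q ^ (i + 1)) := by
    simp [shanksTerm]
  rw [sum_range_succ', zeroth_term, add_sub_cancel_right]
  refine dvd_sum fun s _ ↦ ?_
  have pow_dvd : q ^ (n + 1) ∣ q ^ ((s + 1) * (n + 1)) :=
    pow_dvd_pow q (Nat.le_mul_of_pos_left _ s.succ_pos)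
  exact ((pow_dvd.mul_left _).mul_right _).mul_right _

end ShanksIdentity

section GaussIdentity

lemma coeff_neg_one_pow_mul_X_pow {R : Type*} [CommRing R] (n a b : ℕ) :
    coeff n ((-1) ^ a * X ^ b : R⟦X⟧) = if n = b then (-1) ^ a else 0 := by
  have : ((-1) ^ a : R⟦X⟧) = C ((-1) ^ a) := by simp
  rw [this, coeff_C_mul_X_pow]

variable (R : Type*) [CommRing R] [TopologicalSpace R]

/-- The series `∑_{m ≥ 1} (-1)^m q^{m²}`; in the usual notation, `1 + 2 * alternatingSquares R` is
the theta series `φ(-q)`. The summation index is shifted to start at `0`. -/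
noncomputable def alternatingSquares : R⟦X⟧ :=
  ∑' m : ℕ, (-1) ^ (m + 1) * X ^ ((m + 1) ^ 2)

lemma summable_alternatingSquares :
    Summable fun m : ℕ ↦ ((-1) ^ (m + 1) * X ^ ((m + 1) ^ 2) : R⟦X⟧) := by
  refine (summable_iff_summable_coeff R).mpr fun n ↦
    summable_of_ne_finset_zero (s := range n) fun m hm ↦ ?_
  rw [coeff_neg_one_pow_mul_X_pow, if_neg]
  have : n ≤ m := by simpa using hm
  nlinarith

lemma multipliable_one_add_X_pow [T2Space R] : Multipliable fun i ↦ (1 : R⟦X⟧) + X ^ (i + 1) := by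
  simpa [sum_range_succ] using Nat.Partition.multipliable_powerSeriesMk_card_countRestricted R 2

lemma isUnit_tprod_one_add_X_pow [T2Space R] : IsUnit (∏' i : ℕ, (1 + X ^ (i + 1)) : R⟦X⟧) := by
  rw [isUnit_iff_constantCoeff,
    (multipliable_one_add_X_pow R).map_tprod constantCoeff (continuous_constantCoeff R)]
  simp

variable {R} in
lemma tendsto_zero_of_X_pow_succ_dvd {f : ℕ → R⟦X⟧} (hf : ∀ n, X ^ (n + 1) ∣ f n) :
    Tendsto f atTop (𝓝 0) := by
  refine (tendsto_iff_coeff_tendsto R f atTop 0).mpr fun d ↦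
    tendsto_const_nhds.congr' ((eventually_ge_atTop d).mono fun n hn ↦ ?_)
  rw [map_zero]
  exact (X_pow_dvd_iff.mp (hf n) d (by lia)).symm

variable [T2Space R]

variable {R} in
lemma coeff_alternatingSquares_of_not_isSquare {n : ℕ} (hn : ¬ IsSquare n) :
    coeff n (alternatingSquares R) = 0 := by
  rw [alternatingSquares, (summable_alternatingSquares R).map_tsum (coeff n) (continuous_coeff R n)]
  refine (tsum_congr fun m ↦ ?_).trans tsum_zero
  rw [coeff_neg_one_pow_mul_X_pow, if_neg]
  rintro rfl
  exact hn (IsSquare.sq _)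

variable {R} in
lemma coeff_one_sub_two_mul_alternatingSquares_of_not_isSquare {n : ℕ} (hn : ¬ IsSquare n) :
    coeff n (1 - 2 * alternatingSquares R) = 0 := by
  have hn0 : n ≠ 0 := by
    rintro rfl
    exact hn IsSquare.zero
  rw [map_sub, coeff_one, if_neg hn0, ← map_ofNat C 2, coeff_C_mul,
    coeff_alternatingSquares_of_not_isSquare hn, mul_zero, sub_zero]

theorem one_add_two_mul_alternatingSquares_mul_tprod [IsTopologicalRing R] :
    (1 + 2 * alternatingSquares R) * ∏' i : ℕ, (1 + X ^ (i + 1)) = ∏' i : ℕ, (1 - X ^ (i + 1)) := by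
  have partial_lhs := ((summable_alternatingSquares R).tendsto_sum_tsum_nat.const_mul 2).const_add 1
    |>.mul (multipliable_one_add_X_pow R).tendsto_prod_tprod_nat
  have partial_rhs := (multipliable_one_sub_X_pow R).tendsto_prod_tprod_nat
  refine sub_eq_zero.mp (tendsto_nhds_unique (partial_lhs.sub partial_rhs) ?_)
  refine tendsto_zero_of_X_pow_succ_dvd fun n ↦ ?_
  rw [← sum_shanksTerm]
  exact pow_dvd_sum_shanksTerm_sub_prod X n

end GaussIdentity

section Coefficients

lemma powerSeries_C_dvd_iff_dvd_coeff {R : Type*} [CommSemiring R] {r : R} {f : R⟦X⟧} :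
    C r ∣ f ↔ ∀ n, r ∣ coeff n f := by
  constructor
  · rintro ⟨g, rfl⟩ n
    exact ⟨coeff n g, coeff_C_mul n g r⟩
  · intro h
    choose c hc using h
    refine ⟨mk c, ?_⟩
    ext n
    rw [hc, coeff_C_mul, coeff_mk]

lemma coeff_mul_eq_zero_of_not_isSquare {R : Type*} [Semiring R] {f g : R⟦X⟧} {d n : ℕ}
    (hf : ∀ s, ¬ d ∣ s → coeff s f = 0) (hg : ∀ t, ¬ IsSquare t → coeff t g = 0)
    (hn : ¬ IsSquare (n : ZMod d)) : coeff n (f * g) = 0 := by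
  rw [coeff_mul]
  refine sum_eq_zero fun ⟨s, t⟩ hst ↦ ?_
  by_cases hs : d ∣ s
  · have ht : ¬ IsSquare t := fun ht ↦ hn <| by
      rw [← mem_antidiagonal.mp hst, Nat.cast_add, (ZMod.natCast_eq_zero_iff s d).mpr hs, zero_add]
      exact ht.map (Nat.castRingHom (ZMod d))
    rw [hg t ht, mul_zero]
  · rw [hf s hs, zero_mul]

lemma coeff_sq_eq_zero_of_charTwo {R : Type*} [CommSemiring R] [CharP R 2] {f : R⟦X⟧} {n : ℕ}
    (h : ∀ m, n = 2 * m → coeff m f = 0) : coeff n (f ^ 2) = 0 := by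
  rw [sq, coeff_mul]
  refine sum_involution (fun ij _ ↦ ij.swap) (fun ij _ ↦ ?_) (fun ij hij hne hswap ↦ hne ?_)
    (fun ij hij ↦ by simpa [add_comm] using hij) (fun ij _ ↦ ij.swap_swap)
  · simp [mul_comm (coeff ij.2 f), CharTwo.add_self_eq_zero]
  · have : ij.2 = ij.1 := congrArg Prod.fst hswap
    rw [h ij.1 (by have := mem_antidiagonal.mp hij; lia), zero_mul]

lemma two_dvd_coeff_sq {f : ℤ⟦X⟧} {n : ℕ} (h : ∀ m, n = 2 * m → coeff m f = 0) :
    2 ∣ coeff n (f ^ 2) := by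
  have := coeff_sq_eq_zero_of_charTwo (f := map (Int.castRingHom (ZMod 2)) f) (n := n)
    fun m hm ↦ by rw [coeff_map, h m hm, map_zero]
  rw [← map_pow, coeff_map] at this
  exact (ZMod.intCast_zmod_eq_zero_iff_dvd _ 2).mp this

end Coefficients

section GeneratingFunctions

variable (R : Type*) [CommRing R] (p : ℕ → Prop) [DecidablePred p]

/-- The power series `∏ (1 - q^i) / (1 + q^i)` over the `i ≥ 1` with `p i`. As
`(1 - q^i) / (1 + q^i) = 1 + ∑_{c ≥ 1} 2 (-1)^c q^{ic}`, it counts the partitions into such parts,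
a part of multiplicity `c` having weight `2 (-1)^c`. -/
noncomputable def signedOverpartitionSeries : R⟦X⟧ :=
  Nat.Partition.genFun fun i c ↦ if p i then 2 * (-1) ^ c else 0

variable {p} in
lemma coeff_signedOverpartitionSeries_of_not_dvd {d n : ℕ} (hp : ∀ i, p i → d ∣ i) (hn : ¬ d ∣ n) :
    coeff n (signedOverpartitionSeries R p) = 0 := by
  rw [signedOverpartitionSeries, Nat.Partition.coeff_genFun]
  refine sum_eq_zero fun μ _ ↦ ?_
  obtain ⟨i, hi, hdi⟩ : ∃ i ∈ μ.parts, ¬ d ∣ i := by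
    by_contra! h
    exact hn (μ.parts_sum ▸ Multiset.dvd_sum h)
  exact prod_eq_zero (i := i) (by simpa using hi) (if_neg fun h ↦ hdi (hp i h))

lemma two_dvd_signedOverpartitionSeries_sub_one : 2 ∣ signedOverpartitionSeries R p - 1 := by
  rw [← map_ofNat C 2, powerSeries_C_dvd_iff_dvd_coeff]
  rintro (_ | n)
  · simp [signedOverpartitionSeries, Nat.Partition.genFun]
  rw [map_sub, coeff_one, if_neg n.succ_ne_zero, sub_zero, signedOverpartitionSeries,
    Nat.Partition.coeff_genFun]
  refine dvd_sum fun μ _ ↦ ?_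
  obtain ⟨i, hi⟩ : ∃ i, i ∈ μ.parts := by
    refine Multiset.exists_mem_of_ne_zero fun h ↦ ?_
    simpa [h] using μ.parts_sum
  refine dvd_trans ?_ (dvd_prod_of_mem _ (a := i) (by simpa using hi))
  beta_reduce
  split_ifs <;> simp

lemma powerSeriesMk_regularOverpartitions (j k : ℕ) :
    (mk fun n ↦ (regularOverpartitions j k n : R)) =
      (mk fun n ↦ (#{μ ∈ Nat.Partition.distincts n | ∀ i ∈ μ.parts, i % k ≠ j} : R)) *
        mk fun n ↦ (#(Nat.Partition.restricted n (· % k ≠ j)) : R) := by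
  ext n
  rw [coeff_mul, Nat.sum_antidiagonal_eq_sum_range_succ_mk, coeff_mk, regularOverpartitions]
  simp only [coeff_mk, Nat.Partition.restricted]
  push_cast
  rfl

variable [TopologicalSpace R] [T2Space R]

lemma hasProd_signedOverpartitionSeries :
    HasProd (fun i ↦ if p (i + 1) then
        1 + ∑' c : ℕ, (2 * (-1) ^ (c + 1) : R) • (X : R⟦X⟧) ^ ((i + 1) * (c + 1)) else 1)
      (signedOverpartitionSeries R p) := by
  convert! Nat.Partition.hasProd_genFun
    (fun i c ↦ if p i then (2 * (-1) ^ c : R) else 0) using 1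
  ext1 i
  split_ifs <;> simp

lemma hasProd_powerSeriesMk_card_distincts_filter :
    HasProd (fun i ↦ if p (i + 1) then (1 : R⟦X⟧) + X ^ (i + 1) else 1)
      (mk fun n ↦ (#{μ ∈ Nat.Partition.distincts n | ∀ i ∈ μ.parts, p i} : R)) := by
  convert! Nat.Partition.hasProd_genFun
    (fun i c ↦ if p i ∧ c < 2 then (1 : R) else 0) using 1
  · ext1 i
    rw [tsum_eq_single 0 fun c hc ↦ by simp [show ¬ c + 1 < 2 by lia]]
    split_ifs <;> simp_all
  · simp_rw [Nat.Partition.genFun, ← Nat.Partition.countRestricted_two,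
      Nat.Partition.countRestricted, filter_filter, card_filter, Finsupp.prod, prod_boole]
    simp [forall₂_and, and_comm]

variable [IsTopologicalRing R]

lemma one_add_tsum_signed_mul_one_add_X_pow {i : ℕ} (hi : i ≠ 0) :
    (1 + ∑' c : ℕ, (2 * (-1) ^ (c + 1) : R) • (X : R⟦X⟧) ^ (i * (c + 1))) * (1 + X ^ i) =
      1 - X ^ i := by
  have hX : constantCoeff (-X ^ i : R⟦X⟧) = 0 := by simp [hi]
  have geometric := tsum_pow_mul_one_sub_of_constantCoeff_eq_zero hX
  have factor_out : ∑' c : ℕ, (2 * (-1) ^ (c + 1) : R) • (X : R⟦X⟧) ^ (i * (c + 1)) =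
      -2 * X ^ i * ∑' c : ℕ, (-X ^ i) ^ c := by
    rw [← (summable_pow_of_constantCoeff_eq_zero hX).tsum_mul_left]
    refine tsum_congr fun c ↦ ?_
    rw [smul_eq_C_mul, neg_pow (X ^ i), pow_mul, map_mul, map_pow, map_neg, map_one, map_ofNat]
    ring
  rw [factor_out]
  linear_combination -2 * X ^ i * geometric

lemma hasProd_powerSeriesMk_regularOverpartitions (j k : ℕ) :
    HasProd (fun i ↦ (if (i + 1) % k ≠ j then (1 : R⟦X⟧) + X ^ (i + 1) else 1) *
        if (i + 1) % k ≠ j then ∑' m : ℕ, X ^ ((i + 1) * m) else 1)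
      (mk fun n ↦ (regularOverpartitions j k n : R)) := by
  rw [powerSeriesMk_regularOverpartitions]
  exact (hasProd_powerSeriesMk_card_distincts_filter R (· % k ≠ j)).mul
    (Nat.Partition.hasProd_powerSeriesMk_card_restricted R (· % k ≠ j))

lemma powerSeriesMk_regularOverpartitions_mul_tprod (j k : ℕ) :
    (mk fun n ↦ (regularOverpartitions j k n : R)) * ∏' i : ℕ, (1 - X ^ (i + 1)) =
      signedOverpartitionSeries R (· % k = j) * ∏' i : ℕ, (1 + X ^ (i + 1)) := by
  have hasProd_lhs := (hasProd_powerSeriesMk_regularOverpartitions R j k).mul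
    (multipliable_one_sub_X_pow R).hasProd
  have hasProd_rhs := (hasProd_signedOverpartitionSeries R (· % k = j)).mul
    (multipliable_one_add_X_pow R).hasProd
  refine hasProd_lhs.unique (hasProd_rhs.congr_fun fun i ↦ ?_)
  by_cases forbidden : (i + 1) % k = j
  · simp only [forbidden, ne_eq, not_true_eq_false, if_false, if_true, one_mul]
    exact (one_add_tsum_signed_mul_one_add_X_pow R i.succ_ne_zero).symm
  · have geometric : (∑' m : ℕ, X ^ ((i + 1) * m)) * (1 - X ^ (i + 1)) = (1 : R⟦X⟧) := by
      simp_rw [pow_mul]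
      exact tsum_pow_mul_one_sub_of_constantCoeff_eq_zero (by simp)
    simp only [forbidden, ne_eq, not_false_eq_true, if_false, if_true, one_mul]
    rw [mul_assoc, geometric, mul_one]

theorem powerSeriesMk_regularOverpartitions_mul_one_add_two_mul_alternatingSquares (j k : ℕ) :
    (mk fun n ↦ (regularOverpartitions j k n : R)) * (1 + 2 * alternatingSquares R) =
      signedOverpartitionSeries R (· % k = j) := by
  refine (isUnit_tprod_one_add_X_pow R).mul_right_cancel ?_
  rw [mul_assoc, one_add_two_mul_alternatingSquares_mul_tprod,
    powerSeriesMk_regularOverpartitions_mul_tprod]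

end GeneratingFunctions

lemma eight_dvd_sub_of_mul_one_add_two_mul_eq {R : Type*} [CommRing R] {G H a : R}
    (hG : G * (1 + 2 * a) = H) (hH : 2 ∣ H - 1) :
    8 ∣ G - (H * (1 - 2 * a) + 4 * a ^ 2) := by
  obtain ⟨h, hh⟩ := hH
  refine ⟨a ^ 2 * h - a ^ 3 * G, ?_⟩
  linear_combination (1 - 2 * a + 4 * a ^ 2) * hG + 4 * a ^ 2 * hh

lemma gcd_dvd_of_mod_eq {i j k : ℕ} (h : i % k = j) : j.gcd k ∣ i := by
  subst h
  exact (Nat.dvd_mod_iff (Nat.gcd_dvd_right _ _)).mp (Nat.gcd_dvd_left _ _)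

lemma two_pow_mul_ne_two_mul_sq {a c : ℕ} (ha : Even a) (hc : Odd c) (m : ℕ) :
    2 ^ a * c ≠ 2 * m ^ 2 := by
  intro h
  have hm : m ≠ 0 := by
    rintro rfl
    simp [hc.pos.ne'] at h
  have valuation := congrArg (padicValNat 2) h
  rw [padicValNat.mul (by simp) hc.pos.ne', padicValNat.mul two_ne_zero (by simpa),
    padicValNat.prime_pow, padicValNat.pow, padicValNat.self one_lt_two,
    padicValNat.eq_zero_of_not_dvd hc.not_two_dvd_nat] at valuation
  obtain ⟨b, rfl⟩ := ha
  lia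

lemma not_isSquare_two_pow_mul_zmod_six (n α : ℕ) :
    ¬ IsSquare ((2 ^ (2 * α + 2) * (6 * n + 5) : ℕ) : ZMod 6) := by
  have four_idempotent : IsIdempotentElem (4 : ZMod 6) := rfl
  have six_eq_zero : (6 : ZMod 6) = 0 := by decide
  have eq_two : ((2 ^ (2 * α + 2) * (6 * n + 5) : ℕ) : ZMod 6) = 2 := by
    calc ((2 ^ (2 * α + 2) * (6 * n + 5) : ℕ) : ZMod 6)
        = 4 ^ (α + 1) * (6 * n + 5) := by
          push_cast; rw [show 2 * α + 2 = 2 * (α + 1) by ring, pow_mul]; norm_num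
      _ = 4 * (0 * n + 5) := by rw [four_idempotent.pow_succ_eq α, six_eq_zero]
      _ = 2 := by rw [zero_mul, zero_add]; decide
  rw [eq_two]
  decide

theorem stmt_18_general {j k N : ℕ} (hsq : ¬ IsSquare (N : ZMod (j.gcd k)))
    (htwo : ∀ m, N ≠ 2 * m ^ 2) : 8 ∣ regularOverpartitions j k N := by
  have coeff_linear : coeff N (signedOverpartitionSeries ℤ (· % k = j) *
      (1 - 2 * alternatingSquares ℤ)) = 0 :=
    coeff_mul_eq_zero_of_not_isSquare
      (fun _ ↦ coeff_signedOverpartitionSeries_of_not_dvd ℤ fun _ ↦ gcd_dvd_of_mod_eq)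
      (fun _ ↦ coeff_one_sub_two_mul_alternatingSquares_of_not_isSquare) hsq
  have coeff_quadratic : 2 ∣ coeff N (alternatingSquares ℤ ^ 2) := two_dvd_coeff_sq fun m hm ↦
    coeff_alternatingSquares_of_not_isSquare fun ⟨r, hr⟩ ↦ htwo r (by rw [hm, hr, sq])
  have mod_eight := eight_dvd_sub_of_mul_one_add_two_mul_eq
    (powerSeriesMk_regularOverpartitions_mul_one_add_two_mul_alternatingSquares ℤ j k)
    (two_dvd_signedOverpartitionSeries_sub_one ℤ (· % k = j))
  rw [← map_ofNat C 8, powerSeries_C_dvd_iff_dvd_coeff] at mod_eight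
  have coeff_mod_eight : (8 : ℤ) ∣
      regularOverpartitions j k N - 4 * coeff N (alternatingSquares ℤ ^ 2) := by
    simpa only [map_sub, map_add, coeff_linear, zero_add, coeff_mk, ← map_ofNat C 4, coeff_C_mul]
      using mod_eight N
  omega

theorem stmt_18 (n α : ℕ) :
    8 ∣ regularOverpartitions 6 12 (2 ^ (2 * α + 2) * (6 * n + 5)) :=
  stmt_18_general (not_isSquare_two_pow_mul_zmod_six n α)
    (two_pow_mul_ne_two_mul_sq ⟨α + 1, by ring⟩ ⟨3 * n + 2, by ring⟩)
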